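/- (Soundness of the Markov chain reward transformation.) For every Markov chain M = (S, Prob, σ₁, rew) and every monotone f : ℝ≥0∞ → ℝ≥0∞ with f(0) = 0, the expected f-transformed cumulative reward of M equals the expected cumulative reward of the transformed chain: E(f(Rew M)) = E(Rew' T_f(M)). -/

import Mathlib

open ENNReal

/-- A Markov chain with rewards: a transition function into probability mass
functions, an initial state, and a reward function. -/
structure MC (S : Type*) where
  P : S → PMF S
  init : S
  rew : S → ℝ≥0∞

namespace MC

variable {S : Type*}

/-- `l` is a path of length `n` of the Markov chain `M`: it starts at the
initial state and all one-step transition probabilities are positive. -/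
def IsPath (M : MC S) (n : ℕ) (l : List S) : Prop :=
  l.length = n ∧ l.head? = some M.init ∧ l.Chain' (fun s s' => 0 < M.P s s')

/-- The probability of a path: the product of its transition probabilities. -/
noncomputable def pathProb (M : MC S) : List S → ℝ≥0∞
  | [] => 1
  | [_] => 1
  | s :: s' :: r => M.P s s' * M.pathProb (s' :: r)

/-- The cumulative reward of a path: the sum of its state rewards. -/
noncomputable def pathRew (M : MC S) (l : List S) : ℝ≥0∞ := (l.map M.rew).sum

/-- The expected `g`-transformed cumulative reward of `M`:
`E(g(Rew M)) = sup_n Σ_{π ∈ Paths^{=n}(M)} Prob(π) · g(Rew(π))`. -/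
noncomputable def expRew (M : MC S) (g : ℝ≥0∞ → ℝ≥0∞) : ℝ≥0∞ :=
  ⨆ n : ℕ, ∑' l : {l : List S // M.IsPath n l}, M.pathProb l.1 * g (M.pathRew l.1)

/-- The reward-transformed Markov chain `T_f(M)`: the state space is augmented
with the accumulated reward of the original chain, and the new rewards are the
incremental differences `f(α + rew(σ)) − f(α)`. -/
noncomputable def transform (M : MC S) (f : ℝ≥0∞ → ℝ≥0∞) : MC (S × ℝ≥0∞) where
  P := fun c => (M.P c.1).map (fun s' => (s', c.2 + M.rew c.1))
  init := (M.init, 0)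
  rew := fun c => f (c.2 + M.rew c.1) - f c.2

end MC

/-!
Every path `π` of `M` is the projection of exactly one path `π'` of `T_f(M)`, whose second
components are forced to be the rewards accumulated so far. This correspondence preserves length
and probability. Since `f` is monotone, the truncated subtractions in the new rewards are genuine
differences, so they telescope: `f 0 + Rew'(π') = f (Rew(π))`. Hence the sums over the paths of
each length agree.
-/

namespace MC

section Transform

variable {S : Type*} (M : MC S) (f : ℝ≥0∞ → ℝ≥0∞)

theorem transform_P_self_add (s s' : S) (a : ℝ≥0∞) :
    (M.transform f).P (s, a) (s', a + M.rew s) = M.P s s' := by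
  classical
  simp only [transform, PMF.map_apply, Prod.mk.injEq, and_true]
  exact tsum_ite_eq' s' (M.P s)

theorem transform_P_pos_iff {c d : S × ℝ≥0∞} :
    0 < (M.transform f).P c d ↔ 0 < M.P c.1 d.1 ∧ d.2 = c.2 + M.rew c.1 := by
  simp only [transform, PMF.apply_pos_iff, PMF.mem_support_map_iff]
  constructor
  · rintro ⟨s', hs', rfl⟩
    exact ⟨hs', rfl⟩
  · rintro ⟨hP, hd⟩
    exact ⟨d.1, hP, Prod.ext rfl hd.symm⟩

/-- The list of states `l` with each state paired with the reward accumulated before it, where the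
accumulation starts at `a`. For `a = 0` this turns a path of `M` into the path of `M.transform f`
above it. -/
noncomputable def annotate (a : ℝ≥0∞) : List S → List (S × ℝ≥0∞)
  | [] => []
  | s :: l => (s, a) :: annotate (a + M.rew s) l

@[simp]
theorem map_fst_annotate (a : ℝ≥0∞) (l : List S) : (M.annotate a l).map Prod.fst = l := by
  induction l generalizing a with
  | nil => rfl
  | cons s l ih => rw [annotate, List.map_cons, ih]

@[simp]
theorem length_annotate (a : ℝ≥0∞) (l : List S) : (M.annotate a l).length = l.length := by
  rw [← List.length_map (f := Prod.fst), map_fst_annotate]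

theorem head?_annotate (a : ℝ≥0∞) (l : List S) :
    (M.annotate a l).head? = l.head?.map (·, a) := by
  cases l <;> rfl

theorem isChain_annotate {l : List S} (hl : l.IsChain fun s s' => 0 < M.P s s') (a : ℝ≥0∞) :
    (M.annotate a l).IsChain fun c d => 0 < (M.transform f).P c d := by
  induction hl generalizing a with
  | nil => exact .nil
  | singleton s => exact .singleton _
  | cons_cons hP _ ih => exact .cons_cons ((M.transform_P_pos_iff f).2 ⟨hP, rfl⟩) (ih _)

variable {M f} in
theorem annotate_map_fst {l : List (S × ℝ≥0∞)} {a : ℝ≥0∞} (ha : ∀ c ∈ l.head?, c.2 = a)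
    (hl : l.IsChain fun c d => 0 < (M.transform f).P c d) :
    M.annotate a (l.map Prod.fst) = l := by
  induction l generalizing a with
  | nil => rfl
  | cons c l ih =>
    obtain rfl : c.2 = a := ha c rfl
    obtain ⟨hc, hl⟩ := List.isChain_cons.1 hl
    rw [List.map_cons, annotate, ih (fun d hd => ((M.transform_P_pos_iff f).1 (hc d hd)).2) hl]

theorem pathProb_annotate (a : ℝ≥0∞) (l : List S) :
    (M.transform f).pathProb (M.annotate a l) = M.pathProb l := by
  induction l generalizing a with
  | nil => rfl
  | cons s l ih =>
    cases l with
    | nil => rfl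
    | cons s' l =>
      have tail_eq := ih (a + M.rew s)
      simp only [annotate, pathProb] at tail_eq ⊢
      rw [tail_eq, transform_P_self_add]

variable {f} in
theorem add_pathRew_annotate (hf : Monotone f) (a : ℝ≥0∞) (l : List S) :
    f a + (M.transform f).pathRew (M.annotate a l) = f (a + M.pathRew l) := by
  induction l generalizing a with
  | nil => simp [annotate, pathRew]
  | cons s l ih =>
    calc f a + (M.transform f).pathRew (M.annotate a (s :: l))
        = f a + (f (a + M.rew s) - f a)
            + (M.transform f).pathRew (M.annotate (a + M.rew s) l) := by
          rw [add_assoc]; rfl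
      _ = f (a + M.rew s) + (M.transform f).pathRew (M.annotate (a + M.rew s) l) := by
          rw [add_tsub_cancel_of_le (hf le_self_add)]
      _ = f (a + M.rew s + M.pathRew l) := ih _
      _ = f (a + M.pathRew (s :: l)) := by rw [add_assoc]; rfl

variable {M} {n : ℕ}

theorem IsPath.annotate {l : List S} (hl : M.IsPath n l) :
    (M.transform f).IsPath n (M.annotate 0 l) := by
  obtain ⟨hlen, hhead, hchain⟩ := hl
  refine ⟨by rw [length_annotate, hlen], ?_, M.isChain_annotate f hchain 0⟩
  rw [head?_annotate, hhead]
  rfl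

variable {f} {l : List (S × ℝ≥0∞)}

theorem IsPath.map_fst (hl : (M.transform f).IsPath n l) : M.IsPath n (l.map Prod.fst) := by
  obtain ⟨hlen, hhead, hchain⟩ := hl
  refine ⟨by rw [List.length_map, hlen], by rw [List.head?_map, hhead]; rfl, ?_⟩
  exact (List.isChain_map _).2 (hchain.imp fun _ _ h => ((M.transform_P_pos_iff f).1 h).1)

theorem IsPath.annotate_map_fst (hl : (M.transform f).IsPath n l) :
    M.annotate 0 (l.map Prod.fst) = l := by
  refine MC.annotate_map_fst (fun c hc => ?_) hl.2.2
  obtain rfl : (M.transform f).init = c := Option.some.inj (hl.2.1.symm.trans hc)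
  rfl

variable (M f n) in
/-- The correspondence between the paths of length `n` of `M` and those of `M.transform f`, given
by annotating states with accumulated rewards and by forgetting the annotation. -/
@[simps]
noncomputable def pathEquiv :
    {l : List S // M.IsPath n l} ≃ {l : List (S × ℝ≥0∞) // (M.transform f).IsPath n l} where
  toFun l := ⟨M.annotate 0 l.1, l.2.annotate f⟩
  invFun l := ⟨l.1.map Prod.fst, l.2.map_fst⟩
  left_inv l := Subtype.ext (M.map_fst_annotate 0 l.1)
  right_inv l := Subtype.ext l.2.annotate_map_fst

end Transform

end MC

theorem mc_transform_sound_general {S : Type*} (M : MC S) {f : ℝ≥0∞ → ℝ≥0∞} (hf : Monotone f)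
    (g : ℝ≥0∞ → ℝ≥0∞) :
    M.expRew (g ∘ f) = (M.transform f).expRew fun r => g (f 0 + r) := by
  refine iSup_congr fun n => ?_
  rw [← (M.pathEquiv f n).tsum_eq]
  refine tsum_congr fun l => ?_
  simp only [MC.pathEquiv_apply_coe, MC.pathProb_annotate, M.add_pathRew_annotate hf, zero_add,
    Function.comp_apply]

/-- Soundness of the Markov chain reward transformation:
`E(f(Rew M)) = E(Rew' T_f(M))` for monotone `f` with `f(0) = 0`. -/
theorem mc_transform_sound {S : Type*} [Countable S] (M : MC S)
    (f : ℝ≥0∞ → ℝ≥0∞) (hf : Monotone f) (hf0 : f 0 = 0) :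
    M.expRew f = (M.transform f).expRew id := by
  simpa only [hf0, zero_add, Function.id_comp] using mc_transform_sound_general M hf id
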